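/- arXiv:2406.18689 — 2 statements merged into one kernel-verified Lean document; each statement's English description precedes it below -/
import Mathlib

section
/- Let p, q, r, s be natural numbers with q > 0 and s > 0 such that α = (p/q, r/s) lies in 𝒟. Then the α-Hurwitz map T_α admits a finite partition (equivalently, the (p/q, r/s)-Hurwitz continued fraction algorithm satisfies the finite range condition). -/
/-!
The partition consists of the cells cut out of `U_α` by a finite family `K` of generalized circles
with the following property: if `C ∈ K`, or `C` is one of the four sides of `U_α`, then each image
`1/C - b` with `b ∈ ℤ[i]` either belongs to `K` or misses `U_α`. In the latter case the equation of
`1/C - b` has constant sign on the connected set `U_α`. Hence, for `w ∈ U_α`, the cell of `w`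
determines whether `1/(w + b)` lies in `U_α` and, if so, in which cell; so `T_α` maps the part of a
cell in `[b]_α` onto an exact union of cells (`admits_of_invariant`).

With `N = q s`, circles are encoded by integral Hermitian forms `(A, X, Y, C)` of discriminant
`X² + Y² - A C = N²`; both integrality and discriminant are preserved by the images above. Such a
form with bounded `A` whose circle meets `U_α` (contained in the closed unit disc) has all its
coefficients bounded, so it remains to bound the leading coefficient. If the circle contains
`z ∈ U_α`, its image has leading coefficient at most `|A| |z|² + 2N` in absolute value
(`abs_const_le`). This contracts large values unless `z` is near a corner `ζ` of `U_α` on the unit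
circle. In that case the circle, if `|A|` is large, is small, so that its image lies near
`1/ζ = conj ζ` modulo `ℤ[i]`. For rational `α` this point is not congruent to a corner
(`no_corner_cycle`), because that would force `α₂ = 1/2` and `(Re ζ)² = 3/4`. So the coefficient
grows by at most `2N` in one step, and the next step contracts it (`hpush_mem`).
-/

noncomputable section
open Complex MeasureTheory Filter
open ComplexConjugate

/-- The half-open unit square `U_α` for `α = (α₁, α₂)`. -/
def Uset (α : ℝ × ℝ) : Set ℂ :=
  {z : ℂ | α.1 - 1 ≤ z.re ∧ z.re < α.1 ∧ α.2 - 1 ≤ z.im ∧ z.im < α.2}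

/-- The Gaussian integers, viewed as a subset of `ℂ`. -/
def gaussianInts : Set ℂ := {z : ℂ | ∃ a b : ℤ, z = (a : ℂ) + (b : ℂ) * Complex.I}

/-- The unique Gaussian integer `⌊z⌋_α` with `z - ⌊z⌋_α ∈ U_α`. -/
def afloor (α : ℝ × ℝ) (z : ℂ) : ℂ :=
  ((⌊z.re - α.1 + 1⌋ : ℤ) : ℂ) + ((⌊z.im - α.2 + 1⌋ : ℤ) : ℂ) * Complex.I

/-- The `α`-Hurwitz map `T_α`. -/
def Tα (α : ℝ × ℝ) (z : ℂ) : ℂ := if z = 0 then 0 else z⁻¹ - afloor α z⁻¹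

/-- The parameter region `𝒟 = B₁(0,0) ∩ cl B₁(1,0) ∩ cl B₁(0,1) ∩ cl B₁(1,1)`
(Euclidean balls in `ℝ²`). -/
def Dset : Set (ℝ × ℝ) :=
  {p | p.1 ^ 2 + p.2 ^ 2 < 1} ∩ {p | (p.1 - 1) ^ 2 + p.2 ^ 2 ≤ 1} ∩
    {p | p.1 ^ 2 + (p.2 - 1) ^ 2 ≤ 1} ∩ {p | (p.1 - 1) ^ 2 + (p.2 - 1) ^ 2 ≤ 1}

/-- The cylinder set `[b]_α`. -/
def cyl (α : ℝ × ℝ) (b : ℂ) : Set ℂ :=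
  {z : ℂ | z ∈ Uset α ∧ z ≠ 0 ∧ afloor α z⁻¹ = b}

/-- The generalized circle `M(a,b,c)`. -/
def Mset (a : ℝ) (b : ℂ) (c : ℝ) : Set ℂ :=
  {z : ℂ | (a : ℂ) * z * conj z - conj b * z - b * conj z + (c : ℂ) = 0}

/-- `T_α` admits a finite partition: a finite family of pairwise disjoint Borel subsets of
`U_α` whose union is `U_α` up to a Lebesgue null set, such that `T_α([b]_α ∩ P)` is a union
of partition elements up to a Lebesgue null set, for every nonempty cylinder `[b]_α` and
every partition element `P`. -/
def AdmitsFinitePartition (α : ℝ × ℝ) : Prop :=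
  ∃ Part : Finset (Set ℂ),
    (∀ P ∈ Part, MeasurableSet P ∧ P ⊆ Uset α) ∧
    (∀ P ∈ Part, ∀ Q ∈ Part, P ≠ Q → Disjoint P Q) ∧
    volume ((Uset α \ ⋃ P ∈ Part, P) ∪ ((⋃ P ∈ Part, P) \ Uset α)) = 0 ∧
    ∀ b ∈ gaussianInts, (cyl α b).Nonempty → ∀ P ∈ Part,
      ∃ Qart : Finset (Set ℂ), Qart ⊆ Part ∧
        volume ((Tα α '' (cyl α b ∩ P) \ ⋃ Q ∈ Qart, Q) ∪
          ((⋃ Q ∈ Qart, Q) \ Tα α '' (cyl α b ∩ P))) = 0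

/-- A Hermitian form with integer coefficients `(A, X, Y, C)`, evaluated at `(z, 1)`:
`A |z|² - 2 X Re z - 2 Y Im z + C`. Its zero set is a generalized circle; for `A ≠ 0` it has
center `(X + Y i) / A` and radius `√(X² + Y² - A C) / |A|`. -/
def hform (F : ℤ × ℤ × ℤ × ℤ) (z : ℂ) : ℝ :=
  F.1 * (z.re ^ 2 + z.im ^ 2) - 2 * F.2.1 * z.re - 2 * F.2.2.1 * z.im + F.2.2.2

/-- The discriminant `X² + Y² - A C` of a form. -/
def hdisc (F : ℤ × ℤ × ℤ × ℤ) : ℤ := F.2.1 ^ 2 + F.2.2.1 ^ 2 - F.1 * F.2.2.2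

/-- The form whose zero set is the image of that of `F` under `z ↦ 1/z - (m + n i)`. -/
def hpush (m n : ℤ) (F : ℤ × ℤ × ℤ × ℤ) : ℤ × ℤ × ℤ × ℤ :=
  (F.2.2.2, F.2.1 - F.2.2.2 * m, -F.2.2.1 - F.2.2.2 * n,
    F.1 - 2 * F.2.1 * m + 2 * F.2.2.1 * n + F.2.2.2 * (m ^ 2 + n ^ 2))

/-- The forms of discriminant `N²` whose circle meets `U_α` and whose leading coefficient is at
most `M`, or at most `M + 2N` provided the circle meets `U_α` only where `|z|² ≤ ρ`. For suitable
`M` and `ρ` this family is stable under all `hpush m n`, as long as the circle still meets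
`U_α`. -/
def admForms (α : ℝ × ℝ) (N : ℕ) (M ρ : ℝ) : Set (ℤ × ℤ × ℤ × ℤ) :=
  {F | hdisc F = (N : ℤ) ^ 2 ∧ (∃ z ∈ Uset α, hform F z = 0) ∧
    (|(F.1 : ℝ)| ≤ M ∨ (|(F.1 : ℝ)| ≤ M + 2 * N ∧
      ∀ z ∈ Uset α, hform F z = 0 → z.re ^ 2 + z.im ^ 2 ≤ ρ))}

/-! ### Hermitian forms -/

lemma hdisc_hpush (m n : ℤ) (F : ℤ × ℤ × ℤ × ℤ) : hdisc (hpush m n F) = hdisc F := by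
  simp only [hdisc, hpush]; ring

lemma continuous_hform (F : ℤ × ℤ × ℤ × ℤ) : Continuous (hform F) := by
  unfold hform; fun_prop

lemma hform_hpush (m n : ℤ) (F : ℤ × ℤ × ℤ × ℤ) (w : ℂ)
    (h : w + ((m : ℂ) + (n : ℂ) * Complex.I) ≠ 0) :
    hform (hpush m n F) w = Complex.normSq (w + ((m : ℂ) + (n : ℂ) * Complex.I)) *
      hform F (w + ((m : ℂ) + (n : ℂ) * Complex.I))⁻¹ := by
  have h0 : Complex.normSq (w + ((m : ℂ) + (n : ℂ) * Complex.I)) ≠ 0 := by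
    simpa [Complex.normSq_eq_zero] using h
  set u := w + ((m : ℂ) + (n : ℂ) * Complex.I) with hu
  have hre : w.re = u.re - m := by simp [hu]
  have him : w.im = u.im - n := by simp [hu]
  have hns : Complex.normSq u = u.re ^ 2 + u.im ^ 2 := by rw [Complex.normSq_apply]; ring
  simp only [hform, hpush, Complex.inv_re, Complex.inv_im, hre, him]
  rw [hns] at h0 ⊢
  push_cast
  field_simp
  ring

lemma hform_hpush_of_eq_zero (m n : ℤ) (F : ℤ × ℤ × ℤ × ℤ) (w : ℂ)
    (h : w + ((m : ℂ) + (n : ℂ) * Complex.I) = 0) : hform (hpush m n F) w = F.1 := by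
  have hre : w.re = - m := by
    have := congrArg Complex.re h; simp at this; linarith
  have him : w.im = - n := by
    have := congrArg Complex.im h; simp at this; linarith
  simp only [hform, hpush, hre, him]
  push_cast
  ring

lemma sign_hform_hpush (m n : ℤ) (F : ℤ × ℤ × ℤ × ℤ) (w : ℂ)
    (h : w + ((m : ℂ) + (n : ℂ) * Complex.I) ≠ 0) :
    SignType.sign (hform (hpush m n F) w) =
      SignType.sign (hform F (w + ((m : ℂ) + (n : ℂ) * Complex.I))⁻¹) := by
  rw [hform_hpush m n F w h, sign_mul, sign_pos (Complex.normSq_pos.mpr h), one_mul]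

/-- The vector from a point `z` of the circle to its center, scaled by `A`, has length
`√(hdisc F) = N`. -/
lemma hform_center (F : ℤ × ℤ × ℤ × ℤ) (N : ℕ) (hd : hdisc F = (N : ℤ) ^ 2) (z : ℂ)
    (hz : hform F z = 0) :
    ((F.2.1 : ℝ) - F.1 * z.re) ^ 2 + ((F.2.2.1 : ℝ) - F.1 * z.im) ^ 2 = (N : ℝ) ^ 2 := by
  have h1 : ((F.2.1 : ℝ)) ^ 2 + (F.2.2.1 : ℝ) ^ 2 - F.1 * F.2.2.2 = (N : ℝ) ^ 2 := by
    unfold hdisc at hd; exact_mod_cast hd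
  unfold hform at hz
  linear_combination h1 + (F.1 : ℝ) * hz

/-- The constant coefficient of a form becomes the leading coefficient after `hpush`; this bounds
it when the circle passes through a point `z` with `|z|² ≤ ρ`. -/
lemma abs_const_le (F : ℤ × ℤ × ℤ × ℤ) (N : ℕ) (hd : hdisc F = (N : ℤ) ^ 2) (z : ℂ)
    (hz : hform F z = 0) (ρ : ℝ) (h1 : z.re ^ 2 + z.im ^ 2 ≤ 1)
    (hρ : z.re ^ 2 + z.im ^ 2 ≤ ρ) :
    |(F.2.2.2 : ℝ)| ≤ |(F.1 : ℝ)| * ρ + 2 * N := by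
  have hc := hform_center F N hd z hz
  set u := (F.2.1 : ℝ) - F.1 * z.re with hu
  set v := (F.2.2.1 : ℝ) - F.1 * z.im with hv
  have hC : (F.2.2.2 : ℝ) = F.1 * (z.re ^ 2 + z.im ^ 2) + 2 * (u * z.re + v * z.im) := by
    unfold hform at hz
    rw [hu, hv]; linear_combination hz
  have hcs : |u * z.re + v * z.im| ≤ N := by
    apply abs_le_of_sq_le_sq _ (Nat.cast_nonneg N)
    nlinarith [sq_nonneg (u * z.im - v * z.re),
      mul_le_mul_of_nonneg_left h1 (sq_nonneg (N : ℝ))]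
  calc |(F.2.2.2 : ℝ)| ≤ |(F.1 : ℝ) * (z.re ^ 2 + z.im ^ 2)| + |2 * (u * z.re + v * z.im)| := by
        rw [hC]; exact abs_add_le _ _
    _ = |(F.1 : ℝ)| * (z.re ^ 2 + z.im ^ 2) + 2 * |u * z.re + v * z.im| := by
        rw [abs_mul, abs_mul, abs_of_nonneg (by positivity : 0 ≤ z.re ^ 2 + z.im ^ 2), abs_two]
    _ ≤ _ := by
        have := mul_le_mul_of_nonneg_left hρ (abs_nonneg (F.1 : ℝ))
        linarith

/-- Two points of a circle are at most one diameter apart. -/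
lemma dist_on_circle (F : ℤ × ℤ × ℤ × ℤ) (N : ℕ) (hd : hdisc F = (N : ℤ) ^ 2) (z z' : ℂ)
    (hz : hform F z = 0) (hz' : hform F z' = 0) : |(F.1 : ℝ)| * ‖z - z'‖ ≤ 2 * N := by
  have h (y : ℂ) (hy : hform F y = 0) :
      ‖(F.1 : ℂ) * y - ((F.2.1 : ℂ) + (F.2.2.1 : ℂ) * Complex.I)‖ ≤ N := by
    have hc := hform_center F N hd y hy
    apply abs_le_of_sq_le_sq' _ (Nat.cast_nonneg N) |>.2
    rw [← Complex.normSq_eq_norm_sq, Complex.normSq_apply]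
    simp
    nlinarith
  have e : (F.1 : ℂ) * (z - z') = ((F.1 : ℂ) * z - ((F.2.1 : ℂ) + (F.2.2.1 : ℂ) * Complex.I)) -
      ((F.1 : ℂ) * z' - ((F.2.1 : ℂ) + (F.2.2.1 : ℂ) * Complex.I)) := by ring
  have e2 : |(F.1 : ℝ)| * ‖z - z'‖ = ‖(F.1 : ℂ) * (z - z')‖ := by
    rw [norm_mul, Complex.norm_intCast]
  rw [e2, e]
  have := norm_sub_le ((F.1 : ℂ) * z - ((F.2.1 : ℂ) + (F.2.2.1 : ℂ) * Complex.I))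
    ((F.1 : ℂ) * z' - ((F.2.1 : ℂ) + (F.2.2.1 : ℂ) * Complex.I))
  linarith [h z hz, h z' hz']

/-! ### Geometry of the square -/

/-- `|z|²` equals the bilinear interpolation of its corner values minus
`t (1 - t) + s (1 - s)`, where `z = α - (t + s i)`. -/
lemma normSq_square_le (α : ℝ × ℝ) (hD : α ∈ Dset) (x y : ℝ) (hx0 : α.1 - 1 ≤ x) (hx1 : x ≤ α.1)
    (hy0 : α.2 - 1 ≤ y) (hy1 : y ≤ α.2) :
    x ^ 2 + y ^ 2 ≤ 1 - (α.1 - x) * (x - (α.1 - 1)) - (α.2 - y) * (y - (α.2 - 1)) := by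
  obtain ⟨⟨⟨h1, h2⟩, h3⟩, h4⟩ := hD
  simp only [Set.mem_ofPred_eq] at h1 h2 h3 h4
  obtain ⟨t, ht⟩ : ∃ t, t = α.1 - x := ⟨_, rfl⟩
  obtain ⟨s, hs⟩ : ∃ s, s = α.2 - y := ⟨_, rfl⟩
  have hxt : x = α.1 - t := by linarith
  have hys : y = α.2 - s := by linarith
  subst hxt hys
  have ht0 : 0 ≤ t := by linarith
  have hs0 : 0 ≤ s := by linarith
  have ht1 : 0 ≤ 1 - t := by linarith
  have hs1 : 0 ≤ 1 - s := by linarith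
  have a1 := mul_le_mul_of_nonneg_left h1.le (mul_nonneg ht1 hs1)
  have a2 := mul_le_mul_of_nonneg_left h2 (mul_nonneg ht0 hs1)
  have a3 := mul_le_mul_of_nonneg_left h3 (mul_nonneg ht1 hs0)
  have a4 := mul_le_mul_of_nonneg_left h4 (mul_nonneg ht0 hs0)
  linarith

lemma Uset_normSq_le (α : ℝ × ℝ) (hD : α ∈ Dset) (z : ℂ) (hz : z ∈ Uset α) :
    z.re ^ 2 + z.im ^ 2 ≤ 1 := by
  obtain ⟨h1, h2, h3, h4⟩ := hz
  have := normSq_square_le α hD z.re z.im h1 h2.le h3 h4.le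
  nlinarith [mul_nonneg (sub_nonneg.mpr h2.le) (sub_nonneg.mpr h1),
    mul_nonneg (sub_nonneg.mpr h4.le) (sub_nonneg.mpr h3)]

lemma square_unit_corner (α : ℝ × ℝ) (hD : α ∈ Dset) (x y : ℝ) (hx0 : α.1 - 1 ≤ x) (hx1 : x ≤ α.1)
    (hy0 : α.2 - 1 ≤ y) (hy1 : y ≤ α.2) (h : 1 ≤ x ^ 2 + y ^ 2) :
    x ^ 2 + y ^ 2 = 1 ∧ (x = α.1 ∨ x = α.1 - 1) ∧ (y = α.2 ∨ y = α.2 - 1) := by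
  have := normSq_square_le α hD x y hx0 hx1 hy0 hy1
  have p1 := mul_nonneg (sub_nonneg.mpr hx1) (sub_nonneg.mpr hx0)
  have p2 := mul_nonneg (sub_nonneg.mpr hy1) (sub_nonneg.mpr hy0)
  refine ⟨by linarith, ?_, ?_⟩
  · have : (α.1 - x) * (x - (α.1 - 1)) = 0 := by linarith
    rcases mul_eq_zero.mp this with h | h
    · left; linarith
    · right; linarith
  · have : (α.2 - y) * (y - (α.2 - 1)) = 0 := by linarith
    rcases mul_eq_zero.mp this with h | h
    · left; linarith
    · right; linarith

lemma Dset_snd_mem (α : ℝ × ℝ) (hD : α ∈ Dset) (h2 : 0 ≤ α.2) :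
    0 < α.2 ∧ α.2 < 1 := by
  obtain ⟨⟨⟨h1, h2'⟩, h3⟩, h4⟩ := hD
  simp only [Set.mem_ofPred_eq] at h1 h2' h3 h4
  refine ⟨?_, by nlinarith⟩
  rcases h2.lt_or_eq with h | h
  · exact h
  · rw [← h] at h3 h4
    have : α.1 = 0 := by nlinarith
    rw [this] at h4; norm_num at h4

lemma sq_rat_ne (a : ℚ) : a ^ 2 ≠ 3 / 4 := by
  intro h
  have hs : IsSquare (3 : ℚ) := ⟨2 * a, by linear_combination -4 * h⟩
  have h3 : IsSquare (3 : ℕ) := by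
    rw [← Rat.isSquare_natCast_iff]; exact_mod_cast hs
  obtain ⟨k, hk⟩ := h3
  have : k ≤ 2 := by nlinarith
  interval_cases k <;> omega

/-- For rational `α`, the inverse `1/ζ = conj ζ` of a corner `ζ` on the unit circle is not
congruent to another such corner modulo `ℤ[i]`. Comparing imaginary parts, a congruence would
force `α₂ = 1/2`, and then `(Re ζ)² = 3/4`. -/
lemma no_corner_cycle (α : ℝ × ℝ) (hD : α ∈ Dset) (a₁ : ℚ) (ha : α.1 = a₁) (h2 : 0 ≤ α.2)
    (ζ ω : ℂ) (hζ : ζ ∈ Set.Icc (α.1 - 1) α.1 ×ℂ Set.Icc (α.2 - 1) α.2)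
    (hω : ω ∈ Set.Icc (α.1 - 1) α.1 ×ℂ Set.Icc (α.2 - 1) α.2)
    (hζ1 : 1 ≤ ζ.re ^ 2 + ζ.im ^ 2) (hω1 : 1 ≤ ω.re ^ 2 + ω.im ^ 2)
    (n : ℤ) (hn : (ζ⁻¹ - ω).im = n) : False := by
  obtain ⟨⟨z1, z2⟩, z3, z4⟩ := hζ
  obtain ⟨⟨w1, w2⟩, w3, w4⟩ := hω
  obtain ⟨ez, zx, zy⟩ := square_unit_corner α hD _ _ z1 z2 z3 z4 hζ1
  obtain ⟨-, -, wy⟩ := square_unit_corner α hD _ _ w1 w2 w3 w4 hω1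
  have hns : Complex.normSq ζ = 1 := by rw [Complex.normSq_apply]; linarith
  rw [Complex.sub_im, Complex.inv_im, hns, div_one] at hn
  obtain ⟨p0, p1⟩ := Dset_snd_mem α hD h2
  have hk : ∃ k : ℤ, 2 * α.2 = k := by
    rcases zy with e | e <;> rcases wy with e' | e' <;> rw [e, e'] at hn
    · exact ⟨-n, by push_cast; linarith⟩
    · exact ⟨-n + 1, by push_cast; linarith⟩
    · exact ⟨-n + 1, by push_cast; linarith⟩
    · exact ⟨-n + 2, by push_cast; linarith⟩
  obtain ⟨k, hk⟩ := hk
  have hk1 : k = 1 := by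
    have : (0 : ℝ) < k := by linarith
    have h3 : (k : ℝ) < 2 := by linarith
    have : 0 < k := by exact_mod_cast this
    have : k < 2 := by exact_mod_cast h3
    omega
  rw [hk1] at hk
  push_cast at hk
  have him : ζ.im ^ 2 = 1 / 4 := by
    have hα : α.2 = 1 / 2 := by linarith
    rcases zy with e | e <;> rw [e, hα] <;> norm_num
  have hre : ζ.re ^ 2 = 3 / 4 := by linarith
  rcases zx with e | e
  · rw [e, ha] at hre
    have h : ((a₁ ^ 2 : ℚ) : ℝ) = ((3 / 4 : ℚ) : ℝ) := by
      push_cast; exact hre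
    exact sq_rat_ne a₁ (Rat.cast_injective h)
  · rw [e, ha] at hre
    have h : (((a₁ - 1) ^ 2 : ℚ) : ℝ) = ((3 / 4 : ℚ) : ℝ) := by
      push_cast; exact hre
    exact sq_rat_ne (a₁ - 1) (Rat.cast_injective h)

/-- Quantitative form of `no_corner_cycle`, by compactness: if `z` is close to the unit circle and
`z'` is close to `z`, then a translate of `1/z'` lying in `U_α` stays away from the unit circle. -/
lemma exists_gap (α : ℝ × ℝ) (hD : α ∈ Dset) (a₁ : ℚ) (ha : α.1 = a₁) (h2 : 0 ≤ α.2) :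
    ∃ ρ ε : ℝ, 0 < ρ ∧ ρ < 1 ∧ 0 < ε ∧ ∀ z ∈ Uset α, ρ < z.re ^ 2 + z.im ^ 2 → ∀ z' : ℂ,
      ‖z - z'‖ ≤ ε → ∀ m n : ℤ, z'⁻¹ - ((m : ℂ) + (n : ℂ) * Complex.I) ∈ Uset α →
        (z'⁻¹ - ((m : ℂ) + (n : ℂ) * Complex.I)).re ^ 2 +
          (z'⁻¹ - ((m : ℂ) + (n : ℂ) * Complex.I)).im ^ 2 ≤ ρ := by
  by_contra hcon
  push Not at hcon
  have hpos (k : ℕ) : (0 : ℝ) < 1 / ((k : ℝ) + 2) := by positivity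
  have hlt (k : ℕ) : 1 / ((k : ℝ) + 2) < 1 := by
    rw [div_lt_one (by positivity)]; linarith [(Nat.cast_nonneg k : (0 : ℝ) ≤ k)]
  have H (k : ℕ) := hcon (1 - 1 / ((k : ℝ) + 2)) (1 / ((k : ℝ) + 2))
    (by linarith [hlt k]) (by linarith [hpos k]) (hpos k)
  choose z hzU hz1 z' hzz m n hwU hw1 using H
  set w : ℕ → ℂ := fun k => (z' k)⁻¹ - ((m k : ℂ) + (n k : ℂ) * Complex.I) with hw
  set S : Set ℂ := Set.Icc (α.1 - 1) α.1 ×ℂ Set.Icc (α.2 - 1) α.2 with hS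
  have hUS : Uset α ⊆ S := fun y hy => ⟨⟨hy.1, hy.2.1.le⟩, hy.2.2.1, hy.2.2.2.le⟩
  have hSc : IsCompact S := isCompact_Icc.reProdIm isCompact_Icc
  obtain ⟨⟨ζ, ω⟩, ⟨hζ, hω⟩, φ, hφ, hlim⟩ := (hSc.prod hSc).tendsto_subseq
    (x := fun k => (z k, w k)) (fun k => ⟨hUS (hzU k), hUS (hwU k)⟩)
  have hzl : Tendsto (fun k => z (φ k)) atTop (nhds ζ) :=
    (continuous_fst.tendsto _).comp hlim
  have hwl : Tendsto (fun k => w (φ k)) atTop (nhds ω) :=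
    (continuous_snd.tendsto _).comp hlim
  have hε : Tendsto (fun k => 1 / (((φ k : ℕ) : ℝ) + 2)) atTop (nhds 0) := by
    have : Tendsto (fun k : ℕ => 1 / ((k : ℝ) + 2)) atTop (nhds 0) :=
      tendsto_const_nhds.div_atTop
        (tendsto_atTop_add_const_right _ _ tendsto_natCast_atTop_atTop)
    exact this.comp hφ.tendsto_atTop
  have hns : Continuous fun y : ℂ => y.re ^ 2 + y.im ^ 2 := by fun_prop
  have hρ : Tendsto (fun k => 1 - 1 / (((φ k : ℕ) : ℝ) + 2)) atTop (nhds 1) := by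
    simpa using hε.const_sub 1
  have hζ1 : 1 ≤ ζ.re ^ 2 + ζ.im ^ 2 :=
    le_of_tendsto_of_tendsto' hρ ((hns.tendsto _).comp hzl) (fun k => (hz1 (φ k)).le)
  have hω1 : 1 ≤ ω.re ^ 2 + ω.im ^ 2 :=
    le_of_tendsto_of_tendsto' hρ ((hns.tendsto _).comp hwl) (fun k => (hw1 (φ k)).le)
  have hd : Tendsto (fun k => z (φ k) - z' (φ k)) atTop (nhds 0) :=
    squeeze_zero_norm (fun k => hzz (φ k)) hε
  have hzl' : Tendsto (fun k => z' (φ k)) atTop (nhds ζ) := by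
    simpa using hzl.sub hd
  have hζ0 : ζ ≠ 0 := by
    rintro rfl; norm_num at hζ1
  have hb : Tendsto (fun k => ((z' (φ k))⁻¹ - w (φ k)).im) atTop (nhds (ζ⁻¹ - ω).im) :=
    (Complex.continuous_im.tendsto _).comp ((hzl'.inv₀ hζ0).sub hwl)
  have hmem : (ζ⁻¹ - ω).im ∈ Set.range ((↑) : ℤ → ℝ) := by
    refine Int.isClosedEmbedding_coe_real.isClosed_range.mem_of_tendsto hb
      (Eventually.of_forall fun k => ⟨n (φ k), ?_⟩)
    simp [hw]
  obtain ⟨j, hj⟩ := hmem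
  exact no_corner_cycle α hD a₁ ha h2 ζ ω hζ hω hζ1 hω1 j hj.symm

/-! ### The invariant finite family of circles -/

lemma admForms_finite (α : ℝ × ℝ) (hD : α ∈ Dset) (N : ℕ) (M ρ : ℝ) :
    (admForms α N M ρ).Finite := by
  set L : ℤ := ⌈M + 2 * N⌉ with hL
  set B : ℤ := L + N with hB
  set E : ℤ := L + 2 * N with hE
  apply ((Set.finite_Icc (-L) L).prod ((Set.finite_Icc (-B) B).prod
    ((Set.finite_Icc (-B) B).prod (Set.finite_Icc (-E) E)))).subset
  rintro ⟨A, X, Y, C⟩ ⟨hd, ⟨z, hzU, hz⟩, hA⟩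
  have hA' : |(A : ℝ)| ≤ L := by
    refine le_trans ?_ (Int.le_ceil _)
    have : (0 : ℝ) ≤ N := Nat.cast_nonneg N
    rcases hA with h | h
    · simp only at h; linarith
    · exact h.1
  have h1 := Uset_normSq_le α hD z hzU
  have hc := hform_center _ N hd z hz
  have hC := abs_const_le _ N hd z hz 1 h1 h1
  simp only at hc hC
  have hx : |z.re| ≤ 1 := abs_le_of_sq_le_sq (by nlinarith [sq_nonneg z.im]) one_pos.le
  have hy : |z.im| ≤ 1 := abs_le_of_sq_le_sq (by nlinarith [sq_nonneg z.re]) one_pos.le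
  have key (X : ℤ) (t : ℝ) (ht : |t| ≤ 1) (h : ((X : ℝ) - A * t) ^ 2 ≤ (N : ℝ) ^ 2) :
      |(X : ℝ)| ≤ L + N := by
    have e1 := abs_le_of_sq_le_sq h (Nat.cast_nonneg N)
    have e2 : |(A : ℝ) * t| ≤ L := by
      rw [abs_mul]; nlinarith [abs_nonneg (A : ℝ), abs_nonneg t]
    have := abs_add_le ((X : ℝ) - A * t) (A * t)
    rw [sub_add_cancel] at this
    linarith
  have hX := key X z.re hx (by nlinarith [sq_nonneg ((Y : ℝ) - A * z.im)])
  have hY := key Y z.im hy (by nlinarith [sq_nonneg ((X : ℝ) - A * z.re)])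
  have hC' : |(C : ℝ)| ≤ L + 2 * N := by linarith
  refine ⟨abs_le.mp (by exact_mod_cast hA'), abs_le.mp (by exact_mod_cast hX),
    abs_le.mp (by exact_mod_cast hY), abs_le.mp (by exact_mod_cast hC')⟩

/-- Stability of the family. A circle meeting `U_α` where `|z|² ≤ ρ` has its leading coefficient
contracted below `M`. Otherwise the coefficient may exceed `M`, but by at most `2N`; the
circle is then so small that the gap property `hgap` puts its image in the second part of the
family. -/
lemma hpush_mem (α : ℝ × ℝ) (hD : α ∈ Dset) (N : ℕ) (hN : 0 < N) (M ρ ε : ℝ)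
    (hρ0 : 0 < ρ) (hM1 : 4 * N ≤ M * (1 - ρ)) (hM2 : 2 * N ≤ ε * (M - 2 * N))
    (hgap : ∀ z ∈ Uset α, ρ < z.re ^ 2 + z.im ^ 2 → ∀ z' : ℂ,
      ‖z - z'‖ ≤ ε → ∀ m n : ℤ, z'⁻¹ - ((m : ℂ) + (n : ℂ) * Complex.I) ∈ Uset α →
        (z'⁻¹ - ((m : ℂ) + (n : ℂ) * Complex.I)).re ^ 2 +
          (z'⁻¹ - ((m : ℂ) + (n : ℂ) * Complex.I)).im ^ 2 ≤ ρ)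
    (hρ1 : ρ < 1) (hε : 0 < ε)
    (F : ℤ × ℤ × ℤ × ℤ) (hF : F ∈ admForms α N M ρ) (m n : ℤ)
    (hmeet : ∃ w ∈ Uset α, hform (hpush m n F) w = 0) : hpush m n F ∈ admForms α N M ρ := by
  obtain ⟨hd, ⟨z, hzU, hz⟩, hA⟩ := hF
  have hN' : (0 : ℝ) < N := by exact_mod_cast hN
  have h1 := Uset_normSq_le α hD z hzU
  have hMpos : 0 < M := by nlinarith
  refine ⟨by rw [hdisc_hpush, hd], hmeet, ?_⟩
  change |(F.2.2.2 : ℝ)| ≤ M ∨ (|(F.2.2.2 : ℝ)| ≤ M + 2 * N ∧ _)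
  by_cases hzρ : z.re ^ 2 + z.im ^ 2 ≤ ρ
  · left
    have hA' : |(F.1 : ℝ)| ≤ M + 2 * N := by
      rcases hA with h | h
      · linarith
      · exact h.1
    have := abs_const_le F N hd z hz ρ h1 hzρ
    nlinarith
  · have hA' : |(F.1 : ℝ)| ≤ M := by
      rcases hA with h | h
      · exact h
      · exact absurd (h.2 z hzU hz) hzρ
    have hC := abs_const_le F N hd z hz 1 h1 h1
    by_cases hCM : |(F.2.2.2 : ℝ)| ≤ M
    · exact Or.inl hCM
    right
    push Not at hCM hzρ
    refine ⟨by linarith, fun w hwU hw => ?_⟩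
    have hAbig : M - 2 * N < |(F.1 : ℝ)| := by linarith
    have hMN : 0 < M - 2 * N := by nlinarith
    have hu : w + ((m : ℂ) + (n : ℂ) * Complex.I) ≠ 0 := by
      intro h0
      rw [hform_hpush_of_eq_zero m n F w h0] at hw
      rw [hw, abs_zero] at hAbig
      linarith
    set z' := (w + ((m : ℂ) + (n : ℂ) * Complex.I))⁻¹ with hz'
    have hz'0 : hform F z' = 0 := by
      rw [hform_hpush m n F w hu] at hw
      exact (mul_eq_zero.mp hw).resolve_left (Complex.normSq_pos.mpr hu).ne'
    have hdist := dist_on_circle F N hd z z' hz hz'0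
    have hdε : ‖z - z'‖ ≤ ε := by
      by_contra hlt
      push Not at hlt
      nlinarith [norm_nonneg (z - z')]
    have hwe : w = z'⁻¹ - ((m : ℂ) + (n : ℂ) * Complex.I) := by rw [hz', inv_inv]; ring
    have := hgap z hzU hzρ z' hdε m n (by rw [← hwe]; exact hwU)
    rwa [← hwe] at this

lemma Uset_isPreconnected (α : ℝ × ℝ) : IsPreconnected (Uset α) := by
  have : Uset α = (Set.Ico (α.1 - 1) α.1) ×ℂ (Set.Ico (α.2 - 1) α.2) := by
    ext z; simp [Uset, Complex.mem_reProdIm, and_assoc]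
  rw [this]
  exact (((convex_Ico (𝕜 := ℝ) (α.1 - 1) α.1).linear_preimage Complex.reLm).inter
    ((convex_Ico (𝕜 := ℝ) (α.2 - 1) α.2).linear_preimage Complex.imLm)).isPreconnected

lemma sign_eq_of_not_meet (α : ℝ × ℝ) (F : ℤ × ℤ × ℤ × ℤ)
    (h : ¬ ∃ z ∈ Uset α, hform F z = 0) (w w' : ℂ) (hw : w ∈ Uset α) (hw' : w' ∈ Uset α) :
    SignType.sign (hform F w) = SignType.sign (hform F w') := by
  have key (x y : ℂ) (hx : x ∈ Uset α) (hy : y ∈ Uset α) (hx0 : hform F x < 0)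
      (hy0 : 0 < hform F y) : False := by
    obtain ⟨z, hz, hz0⟩ := (Uset_isPreconnected α).intermediate_value hx hy
      (continuous_hform F).continuousOn ⟨hx0.le, hy0.le⟩
    exact h ⟨z, hz, hz0⟩
  have n1 : hform F w ≠ 0 := fun e => h ⟨w, hw, e⟩
  have n2 : hform F w' ≠ 0 := fun e => h ⟨w', hw', e⟩
  rcases lt_or_gt_of_ne n1 with a | a <;> rcases lt_or_gt_of_ne n2 with b | b
  · rw [sign_neg a, sign_neg b]
  · exact (key w w' hw hw' a b).elim
  · exact (key w' w hw' hw b a).elim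
  · rw [sign_pos a, sign_pos b]

lemma afloor_add (α : ℝ × ℝ) (w : ℂ) (hw : w ∈ Uset α) (m n : ℤ) :
    afloor α (w + ((m : ℂ) + (n : ℂ) * Complex.I)) = (m : ℂ) + (n : ℂ) * Complex.I := by
  obtain ⟨h1, h2, h3, h4⟩ := hw
  have e1 : ⌊(w + ((m : ℂ) + (n : ℂ) * Complex.I)).re - α.1 + 1⌋ = m := by
    rw [Int.floor_eq_iff]; simp; constructor <;> linarith
  have e2 : ⌊(w + ((m : ℂ) + (n : ℂ) * Complex.I)).im - α.2 + 1⌋ = n := by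
    rw [Int.floor_eq_iff]; simp; constructor <;> linarith
  unfold afloor
  rw [e1, e2]

lemma sub_afloor_mem (α : ℝ × ℝ) (z : ℂ) : z - afloor α z ∈ Uset α := by
  have a1 := Int.floor_le (z.re - α.1 + 1)
  have a2 := Int.lt_floor_add_one (z.re - α.1 + 1)
  have b1 := Int.floor_le (z.im - α.2 + 1)
  have b2 := Int.lt_floor_add_one (z.im - α.2 + 1)
  simp only [Uset, afloor, Set.mem_ofPred_eq, Complex.sub_re, Complex.sub_im, Complex.add_re,
    Complex.add_im, Complex.intCast_re, Complex.intCast_im, Complex.mul_re, Complex.mul_im,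
    Complex.I_re, Complex.I_im]
  refine ⟨?_, ?_, ?_, ?_⟩ <;> linarith

/-! ### The partition -/

/-- The part of `U_α` on which the forms in `K` have the prescribed signs `σ`. -/
def signCell (α : ℝ × ℝ) (K : Set (ℤ × ℤ × ℤ × ℤ)) (σ : K → SignType) : Set ℂ :=
  {z | z ∈ Uset α ∧ ∀ F : K, SignType.sign (hform F z) = σ F}

lemma measurableSet_signCell (α : ℝ × ℝ) (K : Set (ℤ × ℤ × ℤ × ℤ)) (hK : K.Finite)
    (σ : K → SignType) : MeasurableSet (signCell α K σ) := by
  have := hK.to_subtype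
  have hU : MeasurableSet (Uset α) := by
    have : Uset α = (Set.Ico (α.1 - 1) α.1) ×ℂ (Set.Ico (α.2 - 1) α.2) := by
      ext z; simp [Uset, Complex.mem_reProdIm, and_assoc]
    rw [this]
    exact (Complex.measurable_re measurableSet_Ico).inter (Complex.measurable_im measurableSet_Ico)
  have hs (F : K) : MeasurableSet {z : ℂ | SignType.sign (hform F z) = σ F} := by
    have hc := (continuous_hform F).measurable
    rcases h : σ F with _ | _ | _
    · have : {z : ℂ | SignType.sign (hform F z) = SignType.zero} = hform F ⁻¹' {0} := by
        ext z; exact sign_eq_zero_iff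
      rw [this]; exact hc (measurableSet_singleton 0)
    · have : {z : ℂ | SignType.sign (hform F z) = SignType.neg} = hform F ⁻¹' Set.Iio 0 := by
        ext z; exact sign_eq_neg_one_iff
      rw [this]; exact hc measurableSet_Iio
    · have : {z : ℂ | SignType.sign (hform F z) = SignType.pos} = hform F ⁻¹' Set.Ioi 0 := by
        ext z; exact sign_eq_one_iff
      rw [this]; exact hc measurableSet_Ioi
  have : signCell α K σ = Uset α ∩ ⋂ F : K, {z : ℂ | SignType.sign (hform F z) = σ F} := by
    ext z; simp [signCell]
  rw [this]
  exact hU.inter (MeasurableSet.iInter hs)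

/-- A finite family `K` of forms yields a finite partition into sign cells as soon as the images
under `T_α` of the circles in `K`, and of the four sides of `U_α` (given by the forms `s₁` to
`s₄`), lie again in `K` or miss `U_α`. -/
lemma admits_of_invariant (α : ℝ × ℝ) (K : Set (ℤ × ℤ × ℤ × ℤ)) (hK : K.Finite)
    (hinv : ∀ F ∈ K, ∀ m n : ℤ, (∃ w ∈ Uset α, hform (hpush m n F) w = 0) → hpush m n F ∈ K)
    (s₁ s₂ s₃ s₄ : ℤ × ℤ × ℤ × ℤ) (hs0 : s₁.1 = 0)
    (hside : ∀ F ∈ ({s₁, s₂, s₃, s₄} : Set (ℤ × ℤ × ℤ × ℤ)), ∀ m n : ℤ,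
      (∃ w ∈ Uset α, hform (hpush m n F) w = 0) → hpush m n F ∈ K)
    (hU : ∀ z, z ∈ Uset α ↔ 0 < hform s₁ z ∧ hform s₂ z ≤ 0 ∧ 0 < hform s₃ z ∧ hform s₄ z ≤ 0) :
    AdmitsFinitePartition α := by
  classical
  have := hK.to_subtype
  have := Fintype.ofFinite K
  have hcover (z : ℂ) (hz : z ∈ Uset α) :
      z ∈ signCell α K (fun F => SignType.sign (hform F z)) := ⟨hz, fun F => rfl⟩
  refine ⟨Finset.univ.image (signCell α K), ?_, ?_, ?_, ?_⟩
  · intro P hP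
    obtain ⟨σ, -, rfl⟩ := Finset.mem_image.mp hP
    exact ⟨measurableSet_signCell α K hK σ, fun z hz => hz.1⟩
  · intro P hP Q hQ hne
    obtain ⟨σ, -, rfl⟩ := Finset.mem_image.mp hP
    obtain ⟨τ, -, rfl⟩ := Finset.mem_image.mp hQ
    rw [Set.disjoint_left]
    intro z hz hz'
    apply hne
    have : σ = τ := by
      funext F; rw [← hz.2 F, hz'.2 F]
    rw [this]
  · have : (⋃ P ∈ Finset.univ.image (signCell α K), P) = Uset α := by
      ext z
      simp only [Set.mem_iUnion, exists_prop]
      constructor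
      · rintro ⟨P, hP, hz⟩
        obtain ⟨σ, -, rfl⟩ := Finset.mem_image.mp hP
        exact hz.1
      · intro hz
        exact ⟨_, Finset.mem_image_of_mem _ (Finset.mem_univ _), hcover z hz⟩
    rw [this]; simp
  · rintro b ⟨m, n, rfl⟩ - P hP
    obtain ⟨σ, -, rfl⟩ := Finset.mem_image.mp hP
    set S := Tα α '' (cyl α ((m : ℂ) + (n : ℂ) * Complex.I) ∩ signCell α K σ) with hS
    refine ⟨(Finset.univ.image (signCell α K)).filter (fun Q => Q ⊆ S),
      Finset.filter_subset _ _, ?_⟩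
    -- The image is exactly the union of the cells it contains: it is saturated.
    have hsub : S ⊆ ⋃ Q ∈ (Finset.univ.image (signCell α K)).filter (fun Q => Q ⊆ S), Q := by
      rintro w ⟨z, ⟨⟨hzU, hz0, hzb⟩, hzσ⟩, hw⟩
      have hwz : w = z⁻¹ - ((m : ℂ) + (n : ℂ) * Complex.I) := by
        rw [← hw, Tα, if_neg hz0, hzb]
      have hwU : w ∈ Uset α := by
        rw [hwz, ← hzb]; exact sub_afloor_mem α _
      have hwzi : w + ((m : ℂ) + (n : ℂ) * Complex.I) = z⁻¹ := by rw [hwz]; ring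
      have hu : w + ((m : ℂ) + (n : ℂ) * Complex.I) ≠ 0 := by
        rw [hwzi]; exact inv_ne_zero hz0
      have hzw : (w + ((m : ℂ) + (n : ℂ) * Complex.I))⁻¹ = z := by rw [hwzi, inv_inv]
      simp only [Set.mem_iUnion, exists_prop]
      refine ⟨_, Finset.mem_filter.mpr
        ⟨Finset.mem_image_of_mem _ (Finset.mem_univ _), ?_⟩, hcover w hwU⟩
      rintro w' ⟨hw'U, hw'σ⟩
      have hsame (F : ℤ × ℤ × ℤ × ℤ)
          (hF : (∃ w ∈ Uset α, hform (hpush m n F) w = 0) → hpush m n F ∈ K) :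
          SignType.sign (hform (hpush m n F) w') = SignType.sign (hform (hpush m n F) w) := by
        by_cases hm : ∃ w ∈ Uset α, hform (hpush m n F) w = 0
        · exact hw'σ ⟨_, hF hm⟩
        · exact sign_eq_of_not_meet α _ hm _ _ hw'U hwU
      have hzside := (hU z).mp hzU
      -- `s₁` is a line, so its image passes through the point with `w' + b = 0`, while its sign
      -- at `w'` is positive.
      have hu' : w' + ((m : ℂ) + (n : ℂ) * Complex.I) ≠ 0 := by
        intro h0
        have h1 := hsame s₁ (hside s₁ (by simp) m n)
        rw [hform_hpush_of_eq_zero m n s₁ w' h0, sign_hform_hpush m n s₁ w hu, hzw, hs0,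
          sign_pos hzside.1] at h1
        simp at h1
      set z' := (w' + ((m : ℂ) + (n : ℂ) * Complex.I))⁻¹ with hz'
      have hsign (F : ℤ × ℤ × ℤ × ℤ)
          (hF : (∃ w ∈ Uset α, hform (hpush m n F) w = 0) → hpush m n F ∈ K) :
          SignType.sign (hform F z') = SignType.sign (hform F z) := by
        have := hsame F hF
        rwa [sign_hform_hpush m n F w hu, sign_hform_hpush m n F w' hu', hzw] at this
      have hpos {x y : ℝ} (h : SignType.sign x = SignType.sign y) (hy : 0 < y) : 0 < x := by
        rw [sign_pos hy] at h; exact sign_eq_one_iff.mp h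
      have hnonpos {x y : ℝ} (h : SignType.sign x = SignType.sign y) (hy : y ≤ 0) : x ≤ 0 := by
        by_contra hx
        exact absurd (hpos h.symm (not_le.mp hx)) (not_lt.mpr hy)
      have hz'U : z' ∈ Uset α := (hU z').mpr
        ⟨hpos (hsign s₁ (hside s₁ (by simp) m n)) hzside.1,
          hnonpos (hsign s₂ (hside s₂ (by simp) m n)) hzside.2.1,
          hpos (hsign s₃ (hside s₃ (by simp) m n)) hzside.2.2.1,
          hnonpos (hsign s₄ (hside s₄ (by simp) m n)) hzside.2.2.2⟩
      have hz'0 : z' ≠ 0 := inv_ne_zero hu'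
      have hfl : afloor α z'⁻¹ = (m : ℂ) + (n : ℂ) * Complex.I := by
        rw [hz', inv_inv]; exact afloor_add α w' hw'U m n
      refine ⟨z', ⟨⟨hz'U, hz'0, hfl⟩, hz'U, fun F => ?_⟩, ?_⟩
      · rw [hsign F (hinv F F.2 m n)]; exact hzσ.2 F
      · rw [Tα, if_neg hz'0, hfl, hz', inv_inv]; ring
    have hsup : (⋃ Q ∈ (Finset.univ.image (signCell α K)).filter (fun Q => Q ⊆ S), Q) ⊆ S :=
      Set.iUnion₂_subset fun Q hQ => (Finset.mem_filter.mp hQ).2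
    rw [Set.sdiff_eq_empty.mpr hsub, Set.sdiff_eq_empty.mpr hsup]
    simp

/-- For rational parameters `α = (p/q, r/s) ∈ 𝒟`, the `α`-Hurwitz map admits a finite
partition (equivalently, the `α`-Hurwitz algorithm satisfies the finite range condition). -/
theorem alphaHurwitz_rational_admits_finite_partition
    (p q r s : ℕ) (hq : 0 < q) (hs : 0 < s)
    (hD : (((p : ℝ) / q, (r : ℝ) / s) : ℝ × ℝ) ∈ Dset) :
    AdmitsFinitePartition ((p : ℝ) / q, (r : ℝ) / s) := by
  set α : ℝ × ℝ := ((p : ℝ) / q, (r : ℝ) / s) with hα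
  have hq' : (0 : ℝ) < q := by exact_mod_cast hq
  have hs' : (0 : ℝ) < s := by exact_mod_cast hs
  have h1 : 0 ≤ α.1 := by simp only [hα]; positivity
  have h2 : 0 ≤ α.2 := by simp only [hα]; positivity
  obtain ⟨ρ, ε, hρ0, hρ1, hε, hgap⟩ :=
    exists_gap α hD ((p : ℚ) / q) (by simp [hα]) h2
  set N : ℕ := q * s with hN
  have hNpos : 0 < N := Nat.mul_pos hq hs
  have hNR : (0 : ℝ) < N := by exact_mod_cast hNpos
  have hN1 : (N : ℝ) * α.1 = p * s := by simp only [hN, hα]; push_cast; field_simp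
  have hN2 : (N : ℝ) * α.2 = r * q := by simp only [hN, hα]; push_cast; field_simp
  have hρ' : 0 < 1 - ρ := by linarith
  obtain ⟨M, hM⟩ : ∃ M : ℝ, M = 4 * N / (1 - ρ) + 2 * N / ε + 2 * N := ⟨_, rfl⟩
  have hM0 : 0 < 4 * N / (1 - ρ) := by positivity
  have hM0' : 0 < 2 * N / ε := by positivity
  have hM1 : 4 * N ≤ M * (1 - ρ) := by
    rw [← div_le_iff₀ hρ']; linarith
  have hM2 : 2 * N ≤ ε * (M - 2 * N) := by
    rw [← div_le_iff₀' hε]; linarith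
  have hM3 : 2 * (N : ℝ) ≤ M := by linarith
  have hα1 : α.1 < 1 := by
    have := hD.1.1.1; simp only [Set.mem_ofPred_eq] at this; nlinarith
  have hα2 : α.2 < 1 := (Dset_snd_mem α hD h2).2
  -- The equations of the four sides: `2N (α₁ - Re z)`, `2N (α₁ - 1 - Re z)`, and likewise for `Im`.
  refine admits_of_invariant α (admForms α N M ρ) (admForms_finite α hD N M ρ)
    (fun F hF m n => hpush_mem α hD N hNpos M ρ ε hρ0 hM1 hM2 hgap hρ1 hε F hF m n)
    (0, N, 0, 2 * (p * s)) (0, N, 0, 2 * (p * s) - 2 * N)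
    (0, 0, N, 2 * (r * q)) (0, 0, N, 2 * (r * q) - 2 * N) rfl ?_ ?_
  · intro F hF m n hmeet
    have hb1 : 0 ≤ (N : ℝ) * α.1 := by positivity
    have hb2 : 0 ≤ (N : ℝ) * α.2 := by positivity
    have hb3 : (N : ℝ) * α.1 ≤ N := by nlinarith
    have hb4 : (N : ℝ) * α.2 ≤ N := by nlinarith
    rw [hN1] at hb1 hb3
    rw [hN2] at hb2 hb4
    refine ⟨?_, hmeet, Or.inl ?_⟩
    · rw [hdisc_hpush]
      rcases hF with rfl | rfl | rfl | rfl <;> simp [hdisc]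
    · rw [abs_le]
      rcases hF with rfl | rfl | rfl | rfl <;> simp only [hpush] <;> push_cast <;>
        constructor <;> linarith
  · intro z
    have e1 : hform (0, N, 0, 2 * (p * s)) z = 2 * N * (α.1 - z.re) := by
      simp only [hform]; push_cast; linear_combination -2 * hN1
    have e2 : hform (0, N, 0, 2 * (p * s) - 2 * N) z = 2 * N * (α.1 - 1 - z.re) := by
      simp only [hform]; push_cast; linear_combination -2 * hN1
    have e3 : hform (0, 0, N, 2 * (r * q)) z = 2 * N * (α.2 - z.im) := by
      simp only [hform]; push_cast; linear_combination -2 * hN2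
    have e4 : hform (0, 0, N, 2 * (r * q) - 2 * N) z = 2 * N * (α.2 - 1 - z.im) := by
      simp only [hform]; push_cast; linear_combination -2 * hN2
    have h2N : (0 : ℝ) < 2 * N := by positivity
    rw [e1, e2, e3, e4, mul_pos_iff_of_pos_left h2N, mul_pos_iff_of_pos_left h2N,
      mul_nonpos_iff_pos_imp_nonpos, mul_nonpos_iff_pos_imp_nonpos]
    simp only [Uset, Set.mem_ofPred_eq]
    constructor
    · rintro ⟨a, b, c, d⟩
      exact ⟨by linarith, ⟨fun _ => by linarith, fun _ => by linarith⟩, by linarith,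
        ⟨fun _ => by linarith, fun _ => by linarith⟩⟩
    · rintro ⟨a, b, c, d⟩
      exact ⟨by linarith [b.1 h2N], by linarith, by linarith [d.1 h2N], by linarith⟩
end
end

section
/- Assume A₀ ∈ ℤ, B₀ ∈ ℤ[i], and zₙ ∈ ℤ[i] for all n ≥ 0, and let (Aₙ), (Bₙ) be defined by the recursion with A₋₁ = 0. Then for every n ≥ 0: Aₙ ∈ ℤ, Bₙ ∈ ℤ[i], and for every z ∈ ℂ with z ≠ 0, z ∈ M(2·Aₙ₋₁, Bₙ, 2·Aₙ) if and only if 1/z − zₙ ∈ M(2·Aₙ, Bₙ₊₁, 2·Aₙ₊₁). In particular, defining sets G₀ = M(0, B₀, 2·A₀) and Gₙ₊₁ = {1/g − zₙ : g ∈ Gₙ, g ≠ 0}, one has Gₙ ⊆ M(2·Aₙ₋₁, Bₙ, 2·Aₙ) for every n ≥ 0. -/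
/-!
The mapping property is a substitution. Multiplying the equation of `M(a, b, c)` by
`1 / (w * conj w)` and putting `w⁻¹ = v + ζ` gives the equation in `v` of
`M(c, conj b - c ζ, c ζ (conj ζ) - b ζ - conj (b ζ) + a)`; this is the recursion
(`mem_Mset_iff_inv_sub_mem`), and the inclusions for `Gₙ` follow by induction.

For integrality, `b ζ + conj (b ζ) = 2 Re (b ζ)` is even when `b` and `ζ` are Gaussian integers,
so the recursion for `2 Aₙ` can be halved within `ℤ` (`exists_int_of_rec`). The induction carries
the integrality of two consecutive terms of `A`.
-/

noncomputable section
open Complex MeasureTheory Filter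
open ComplexConjugate

/-- The maps `w ↦ 1/w - ζ` act on generalized circles by the recursion on coefficients. -/
lemma mem_Mset_iff_inv_sub_mem {a c d : ℝ} {b b' ζ w : ℂ} (hw : w ≠ 0)
    (hb : b' = conj b - (c : ℂ) * ζ)
    (hd : (d : ℂ) = (c : ℂ) * ζ * conj ζ - b * ζ - conj b * conj ζ + (a : ℂ)) :
    w ∈ Mset a b c ↔ w⁻¹ - ζ ∈ Mset c b' d := by
  have hw' : conj w ≠ 0 := (map_ne_zero _).2 hw
  have key : (a : ℂ) * w * conj w - conj b * w - b * conj w + (c : ℂ) =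
      w * conj w * ((c : ℂ) * (w⁻¹ - ζ) * conj (w⁻¹ - ζ) - conj b' * (w⁻¹ - ζ)
        - b' * conj (w⁻¹ - ζ) + (d : ℂ)) := by
    rw [hb, hd]
    simp only [map_sub, map_mul, map_inv₀, Complex.conj_conj, Complex.conj_ofReal]
    field_simp
    ring
  simp only [Mset, Set.mem_ofPred_eq]
  rw [key]
  simp [hw, hw']

lemma exists_int_of_rec {a c d : ℝ} {b ζ : ℂ} (ha : ∃ m : ℤ, a = m) (hc : ∃ m : ℤ, c = m)
    (hb : b ∈ gaussianInts) (hζ : ζ ∈ gaussianInts)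
    (hd : ((2 * d : ℝ) : ℂ) =
      2 * (c : ℂ) * ζ * conj ζ - b * ζ - conj b * conj ζ + 2 * (a : ℂ)) :
    ∃ m : ℤ, d = m := by
  obtain ⟨a, rfl⟩ := ha
  obtain ⟨c, rfl⟩ := hc
  obtain ⟨p, q, rfl⟩ := hb
  obtain ⟨x, y, rfl⟩ := hζ
  refine ⟨c * (x ^ 2 + y ^ 2) - (p * x - q * y) + a, ?_⟩
  have h := congrArg Complex.re hd
  simp at h
  push_cast
  linarith

lemma gaussianInts_rec {c : ℝ} {b ζ : ℂ} (hc : ∃ m : ℤ, c = m)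
    (hb : b ∈ gaussianInts) (hζ : ζ ∈ gaussianInts) :
    conj b - 2 * (c : ℂ) * ζ ∈ gaussianInts := by
  obtain ⟨c, rfl⟩ := hc
  obtain ⟨p, q, rfl⟩ := hb
  obtain ⟨x, y, rfl⟩ := hζ
  refine ⟨p - 2 * c * x, -q - 2 * c * y, ?_⟩
  simp
  ring

/-- Integrality and recursive mapping of the generalized circles `Gₙ = M(2Aₙ₋₁, Bₙ, 2Aₙ)`.
Here the sequence `A` is indexed with a shift: `A n` stands for `Aₙ₋₁` (so `A 0 = A₋₁ = 0`,
`A 1 = A₀`, and `Aₙ = A (n+1)`), while `B n = Bₙ` and `z n = zₙ`.  Assuming `A₀ ∈ ℤ`,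
`B₀ ∈ ℤ[i]`, all `zₙ ∈ ℤ[i]`, and the recursion `2Aₙ₊₁ = 2Aₙ zₙ conj zₙ − Bₙ zₙ −
conj Bₙ conj zₙ + 2Aₙ₋₁`, `Bₙ₊₁ = conj Bₙ − 2Aₙ zₙ`, one has: every `Aₙ ∈ ℤ`, every
`Bₙ ∈ ℤ[i]`, for every `w ≠ 0` the equivalence `w ∈ M(2Aₙ₋₁, Bₙ, 2Aₙ) ↔ 1/w − zₙ ∈
M(2Aₙ, Bₙ₊₁, 2Aₙ₊₁)`, and the sets `G₀ = M(0, B₀, 2A₀)`, `Gₙ₊₁ = 1/Gₙ − zₙ` satisfy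
`Gₙ ⊆ M(2Aₙ₋₁, Bₙ, 2Aₙ)`. -/
theorem circle_recursion_integral_and_maps
    (A : ℕ → ℝ) (B : ℕ → ℂ) (z : ℕ → ℂ)
    (hA0 : A 0 = 0) (hA1 : ∃ m : ℤ, A 1 = (m : ℝ))
    (hB0 : B 0 ∈ gaussianInts) (hz : ∀ n, z n ∈ gaussianInts)
    (hrecA : ∀ n : ℕ, ((2 * A (n + 2) : ℝ) : ℂ) =
      2 * (A (n + 1) : ℂ) * z n * conj (z n) - B n * z n - conj (B n) * conj (z n)
        + 2 * (A n : ℂ))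
    (hrecB : ∀ n : ℕ, B (n + 1) = conj (B n) - 2 * (A (n + 1) : ℂ) * z n)
    (G : ℕ → Set ℂ) (hG0 : G 0 = Mset 0 (B 0) (2 * A 1))
    (hGs : ∀ n : ℕ, G (n + 1) = (fun g : ℂ => g⁻¹ - z n) '' (G n \ {0})) :
    ∀ n : ℕ,
      (∃ m : ℤ, A (n + 1) = (m : ℝ)) ∧ B n ∈ gaussianInts ∧
      (∀ w : ℂ, w ≠ 0 →
        (w ∈ Mset (2 * A n) (B n) (2 * A (n + 1)) ↔
          w⁻¹ - z n ∈ Mset (2 * A (n + 1)) (B (n + 1)) (2 * A (n + 2)))) ∧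
      G n ⊆ Mset (2 * A n) (B n) (2 * A (n + 1)) := by
  have hint : ∀ n, (∃ m : ℤ, A n = m) ∧ (∃ m : ℤ, A (n + 1) = m) ∧ B n ∈ gaussianInts := by
    intro n
    induction n with
    | zero => exact ⟨⟨0, by simp [hA0]⟩, hA1, hB0⟩
    | succ n ih =>
      obtain ⟨ha, hc, hb⟩ := ih
      refine ⟨hc, exists_int_of_rec ha hc hb (hz n) (hrecA n), ?_⟩
      rw [hrecB]
      exact gaussianInts_rec hc hb (hz n)
  have hmap : ∀ (n : ℕ) (w : ℂ), w ≠ 0 →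
      (w ∈ Mset (2 * A n) (B n) (2 * A (n + 1)) ↔
        w⁻¹ - z n ∈ Mset (2 * A (n + 1)) (B (n + 1)) (2 * A (n + 2))) := by
    intro n w hw
    refine mem_Mset_iff_inv_sub_mem hw ?_ ?_
    · rw [hrecB]
      push_cast
      ring
    · rw [hrecA]
      push_cast
      ring
  have hG : ∀ n, G n ⊆ Mset (2 * A n) (B n) (2 * A (n + 1)) := by
    intro n
    induction n with
    | zero => simp [hG0, hA0]
    | succ n ih =>
      rw [hGs]
      rintro _ ⟨g, ⟨hg, hg0⟩, rfl⟩
      exact (hmap n g hg0).1 (ih hg)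
  exact fun n => ⟨(hint n).2.1, (hint n).2.2, hmap n, hG n⟩
end
end
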